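/- In Cliff(4), the set of elements that commute with all of a₋, b₋, c₋ is exactly the 5-dimensional subspace spanned by {1, a₊, b₊, c₊, θ}. -/

import Mathlib

/-!
The elements `am, bm, cm` satisfy the quaternion relations with unit the idempotent
`p = (1 + θ) / 2`; in particular `am² = bm² = cm² = -p`. An element `u` commuting with all three
therefore commutes with `p`, so `u = p u p + q u q` with `q = 1 - p`, and
`am u am = bm u bm = cm u cm = -p u p`. Hence `u` is fixed by the linear map
`v ↦ (p v p - am v am - bm v bm - cm v cm) / 4 + q v q` (`avg` below), which averages the
`p`-corner over the quaternion units. This map sends every monomial in the generators into the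
span of `1, ap, bp, cp, θ`: it kills the odd monomials, fixes `1` and `θ`, and projects the
bivectors to the span of `ap, bp, cp`. As the sixteen ordered monomials span the algebra, `u` lies
in that span. This argument needs no linear independence of the monomials.
-/

noncomputable section
open CliffordAlgebra
/-- The negative-definite quadratic form on ℝⁿ. -/
abbrev Qneg (n : ℕ) : QuadraticForm ℝ (Fin n → ℝ) :=
  QuadraticMap.weightedSumSquares ℝ (fun _ : Fin n => (-1 : ℝ))
/-- Cliff(n), the real Clifford algebra of the negative-definite form on ℝⁿ. -/
abbrev Cl (n : ℕ) := CliffordAlgebra (Qneg n)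
/-- The standard anticommuting generators, each squaring to −1. -/
def e {n : ℕ} (i : Fin n) : Cl n := ι (Qneg n) (Pi.single i 1)
def w : Cl 4 := e 0
def x : Cl 4 := e 1
def y : Cl 4 := e 2
def z : Cl 4 := e 3
def θ : Cl 4 := w * x * y * z
def ap : Cl 4 := (2:ℝ)⁻¹ • (w * x + y * z)
def bp : Cl 4 := (2:ℝ)⁻¹ • (w * y + z * x)
def cp : Cl 4 := (2:ℝ)⁻¹ • (w * z + x * y)
def am : Cl 4 := (2:ℝ)⁻¹ • (w * x - y * z)
def bm : Cl 4 := (2:ℝ)⁻¹ • (w * y - z * x)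
def cm : Cl 4 := (2:ℝ)⁻¹ • (w * z - x * y)

lemma e_sq (i : Fin 4) : (e i : Cl 4) * e i = -1 := by
  simp [e, ι_sq_scalar, QuadraticMap.weightedSumSquares_apply, Pi.single_apply]

lemma e_anti {i j : Fin 4} (h : i ≠ j) : (e i : Cl 4) * e j = -(e j * e i) := by
  rw [eq_neg_iff_add_eq_zero, e, e, ι_mul_ι_add_swap]
  simp [QuadraticMap.polar, QuadraticMap.weightedSumSquares_apply, Fin.sum_univ_four,
    Pi.single_apply]
  fin_cases i <;> fin_cases j <;> simp_all

@[simp] lemma ww : w * w = -1 := e_sq 0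
@[simp] lemma xx : x * x = -1 := e_sq 1
@[simp] lemma yy : y * y = -1 := e_sq 2
@[simp] lemma zz : z * z = -1 := e_sq 3
@[simp] lemma xw : x * w = -(w * x) := e_anti (by decide)
@[simp] lemma yw : y * w = -(w * y) := e_anti (by decide)
@[simp] lemma zw : z * w = -(w * z) := e_anti (by decide)
@[simp] lemma yx : y * x = -(x * y) := e_anti (by decide)
@[simp] lemma zx : z * x = -(x * z) := e_anti (by decide)
@[simp] lemma zy : z * y = -(y * z) := e_anti (by decide)

/-! The same relations with a trailing factor, so that together they rewrite any right-associated
product of generators to a signed ordered monomial. -/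

@[simp] lemma ww' (r : Cl 4) : w * (w * r) = -r := by rw [← mul_assoc, ww, neg_one_mul]
@[simp] lemma xx' (r : Cl 4) : x * (x * r) = -r := by rw [← mul_assoc, xx, neg_one_mul]
@[simp] lemma yy' (r : Cl 4) : y * (y * r) = -r := by rw [← mul_assoc, yy, neg_one_mul]
@[simp] lemma zz' (r : Cl 4) : z * (z * r) = -r := by rw [← mul_assoc, zz, neg_one_mul]
@[simp] lemma xw' (r : Cl 4) : x * (w * r) = -(w * (x * r)) := by
  rw [← mul_assoc, xw, neg_mul, mul_assoc]
@[simp] lemma yw' (r : Cl 4) : y * (w * r) = -(w * (y * r)) := by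
  rw [← mul_assoc, yw, neg_mul, mul_assoc]
@[simp] lemma zw' (r : Cl 4) : z * (w * r) = -(w * (z * r)) := by
  rw [← mul_assoc, zw, neg_mul, mul_assoc]
@[simp] lemma yx' (r : Cl 4) : y * (x * r) = -(x * (y * r)) := by
  rw [← mul_assoc, yx, neg_mul, mul_assoc]
@[simp] lemma zx' (r : Cl 4) : z * (x * r) = -(x * (z * r)) := by
  rw [← mul_assoc, zx, neg_mul, mul_assoc]
@[simp] lemma zy' (r : Cl 4) : z * (y * r) = -(y * (z * r)) := by
  rw [← mul_assoc, zy, neg_mul, mul_assoc]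

/-- The sixteen ordered monomials in the generators. -/
def monomials : Set (Cl 4) :=
  {1, w, x, y, z, w * x, w * y, w * z, x * y, x * z, y * z,
    w * (x * y), w * (x * z), w * (y * z), x * (y * z), w * (x * (y * z))}

lemma generator_mul_mem (i : Fin 4) {m : Cl 4} (hm : m ∈ monomials) :
    e i * m ∈ Submodule.span ℝ monomials := by
  -- Up to sign the product is again an ordered monomial.
  have key : e i * m ∈ monomials ∨ -(e i * m) ∈ monomials := by
    have h : e i = w ∨ e i = x ∨ e i = y ∨ e i = z := by
      fin_cases i
      exacts [.inl rfl, .inr (.inl rfl), .inr (.inr (.inl rfl)), .inr (.inr (.inr rfl))]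
    simp only [monomials, Set.mem_insert_iff, Set.mem_singleton_iff] at hm
    rcases h with h | h | h | h <;> rw [h] <;>
    rcases hm with rfl | rfl | rfl | rfl | rfl | rfl | rfl | rfl | rfl | rfl | rfl | rfl | rfl |
      rfl | rfl | rfl <;>
    simp only [ww, xx, yy, zz, xw, yw, zw, yx, zx, zy, ww', xx', yy', xw', yw', zw', yx',
      zx', zy', mul_neg, neg_neg, mul_one, monomials, Set.mem_insert_iff, Set.mem_singleton_iff,
      true_or, or_true]
  rcases key with h | h
  · exact Submodule.subset_span h
  · exact (Submodule.neg_mem_iff _).1 (Submodule.subset_span h)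

lemma ι_eq_sum (v : Fin 4 → ℝ) : ι (Qneg 4) v = ∑ i, v i • (e i : Cl 4) := by
  simp only [e, ← map_smul, ← map_sum]
  congr 1
  exact pi_eq_sum_univ' v

lemma span_monomials : Submodule.span ℝ monomials = ⊤ := by
  refine Submodule.eq_top_iff'.2 fun u => ?_
  induction u using CliffordAlgebra.left_induction with
  | algebraMap r =>
    rw [Algebra.algebraMap_eq_smul_one]
    exact Submodule.smul_mem _ _ (Submodule.subset_span (by simp [monomials]))
  | add a b ha hb => exact add_mem ha hb
  | ι_mul a v ha =>
    rw [ι_eq_sum, Finset.sum_mul]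
    refine Submodule.sum_mem _ fun i _ => ?_
    rw [smul_mul_assoc]
    refine Submodule.smul_mem _ _ ?_
    have hle : Submodule.span ℝ monomials ≤
        (Submodule.span ℝ monomials).comap (LinearMap.mulLeft ℝ (e i)) :=
      Submodule.span_le.2 fun m hm => generator_mul_mem i hm
    exact hle ha

/-- The idempotent `(1 + θ) / 2`, the unit of the quaternion algebra spanned with `am, bm, cm`. -/
def p : Cl 4 := (2:ℝ)⁻¹ • (1 + θ)

lemma am_sq : am * am = -p := by
  simp [am, p, θ, mul_sub, sub_mul, mul_assoc]
  module

lemma bm_sq : bm * bm = -p := by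
  simp [bm, p, θ, mul_add, add_mul, mul_assoc]
  module

lemma cm_sq : cm * cm = -p := by
  simp [cm, p, θ, mul_sub, sub_mul, mul_assoc]
  module

lemma p_sq : p * p = p := by
  simp [p, θ, mul_add, add_mul, mul_assoc]
  module

/-- Compression to the two corners of the idempotents `p` and `1 - p`, followed on the `p`-corner
by averaging over the quaternion units `p, am, bm, cm`. -/
def avg : Cl 4 →ₗ[ℝ] Cl 4 :=
  (4:ℝ)⁻¹ • (LinearMap.mulLeftRight ℝ (p, p) - LinearMap.mulLeftRight ℝ (am, am)
    - LinearMap.mulLeftRight ℝ (bm, bm) - LinearMap.mulLeftRight ℝ (cm, cm))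
    + LinearMap.mulLeftRight ℝ (1 - p, 1 - p)

lemma avg_apply (u : Cl 4) : avg u =
    (4:ℝ)⁻¹ • (p * u * p - am * u * am - bm * u * bm - cm * u * cm) + (1 - p) * u * (1 - p) := by
  simp [avg]

lemma avg_eq_self {u : Cl 4} (ha : u * am = am * u) (hb : u * bm = bm * u)
    (hc : u * cm = cm * u) : avg u = u := by
  have h1 : am * u * am = -(p * u) := by rw [mul_assoc, ha, ← mul_assoc, am_sq, neg_mul]
  have h2 : bm * u * bm = -(p * u) := by rw [mul_assoc, hb, ← mul_assoc, bm_sq, neg_mul]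
  have h3 : cm * u * cm = -(p * u) := by rw [mul_assoc, hc, ← mul_assoc, cm_sq, neg_mul]
  have h4 : u * p = p * u := by
    rw [← neg_inj, ← mul_neg, ← neg_mul, ← am_sq, ← mul_assoc, ha, mul_assoc, ha, mul_assoc]
  have h5 : p * u * p = p * u := by rw [mul_assoc, h4, ← mul_assoc, p_sq]
  have h6 : (1 - p) * u * (1 - p) = u - p * u := by
    rw [sub_mul, one_mul, mul_sub, mul_one, sub_mul, h5, h4, sub_self, sub_zero]
  rw [avg_apply, h1, h2, h3, h5, h6]
  module

/-- On monomials, `avg` kills the odd ones, fixes `1` and `θ`, and projects the bivectors to the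
span of `ap, bp, cp`. -/
lemma avg_monomial :
    avg 1 = 1 ∧ avg w = 0 ∧ avg x = 0 ∧ avg y = 0 ∧ avg z = 0 ∧
    avg (w * x) = ap ∧ avg (w * y) = bp ∧ avg (w * z) = cp ∧
    avg (x * y) = cp ∧ avg (x * z) = -bp ∧ avg (y * z) = ap ∧
    avg (w * (x * y)) = 0 ∧ avg (w * (x * z)) = 0 ∧ avg (w * (y * z)) = 0 ∧
    avg (x * (y * z)) = 0 ∧ avg (w * (x * (y * z))) = θ := by
  refine ⟨?_, ?_, ?_, ?_, ?_, ?_, ?_, ?_, ?_, ?_, ?_, ?_, ?_, ?_, ?_, ?_⟩ <;>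
  simp [avg_apply, am, bm, cm, ap, bp, cp, p, θ, mul_add, add_mul, mul_sub, sub_mul,
    mul_assoc] <;>
  module

lemma avg_mem (u : Cl 4) : avg u ∈ Submodule.span ℝ ({1, ap, bp, cp, θ} : Set (Cl 4)) := by
  have hle : Submodule.span ℝ monomials ≤
      (Submodule.span ℝ ({1, ap, bp, cp, θ} : Set (Cl 4))).comap avg := by
    refine Submodule.span_le.2 fun m hm => ?_
    have mem {v : Cl 4} (hv : v ∈ ({1, ap, bp, cp, θ} : Set (Cl 4))) :
        v ∈ Submodule.span ℝ ({1, ap, bp, cp, θ} : Set (Cl 4)) :=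
      Submodule.subset_span hv
    have h1 := mem (v := 1) (by simp)
    have ha := mem (v := ap) (by simp)
    have hb := mem (v := bp) (by simp)
    have hc := mem (v := cp) (by simp)
    have ht := mem (v := θ) (by simp)
    simp only [monomials, Set.mem_insert_iff, Set.mem_singleton_iff] at hm
    rcases hm with rfl | rfl | rfl | rfl | rfl | rfl | rfl | rfl | rfl | rfl | rfl | rfl | rfl |
      rfl | rfl | rfl <;>
    simp only [avg_monomial, SetLike.mem_coe, Submodule.mem_comap, neg_mem_iff, zero_mem, h1, ha,
      hb, hc, ht]
  exact hle (span_monomials ▸ Submodule.mem_top)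

lemma commute_of_mem {g : Cl 4} (hg : g ∈ ({1, ap, bp, cp, θ} : Set (Cl 4))) :
    g * am = am * g ∧ g * bm = bm * g ∧ g * cm = cm * g := by
  simp only [Set.mem_insert_iff, Set.mem_singleton_iff] at hg
  rcases hg with rfl | rfl | rfl | rfl | rfl <;> refine ⟨?_, ?_, ?_⟩ <;>
  simp [am, bm, cm, ap, bp, cp, θ, mul_add, add_mul, mul_sub, sub_mul, mul_assoc] <;>
  module

theorem stmt_9 :
    {u : Cl 4 | u * am = am * u ∧ u * bm = bm * u ∧ u * cm = cm * u} =
      (Submodule.span ℝ ({1, ap, bp, cp, θ} : Set (Cl 4)) : Set (Cl 4)) := by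
  ext u
  refine ⟨fun ⟨ha, hb, hc⟩ => avg_eq_self ha hb hc ▸ avg_mem u, fun hu => ?_⟩
  induction hu using Submodule.span_induction with
  | mem g hg => exact commute_of_mem hg
  | zero => simp
  | add a b _ _ ha hb =>
    simp only [Set.mem_ofPred_eq, add_mul, mul_add] at ha hb ⊢
    simp only [ha, hb, and_self]
  | smul r a _ ha =>
    simp only [Set.mem_ofPred_eq, smul_mul_assoc, mul_smul_comm] at ha ⊢
    simp only [ha, and_self]
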